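/- (Negativity of the limiting constant, last claim of Lemma 4.) For every κ ∈ [1, ∞) and every H ∈ (0, 1/2), the constant C_{κ,H} := K_H^{−2} · ∫_0^1 ∫_0^1 ∫_0^∞ [((v−w)/κ + r + 2)_+^{H−1/2} − ((v−w)/κ + r + 1)_+^{H−1/2}] · [r^{H−1/2} − (r−1)_+^{H−1/2}] dr dw dv is finite and strictly negative; equivalently, since K_H^{−2} > 0, the triple Lebesgue integral above is strictly negative. -/

import Mathlib

open MeasureTheory Set

noncomputable section

/-- The truncated power `x ↦ x₊^{H−1/2}`: equal to `x^{H−1/2}` (real power) for `x > 0`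
and to `0` for `x ≤ 0`. -/
def pplus (H x : ℝ) : ℝ := if 0 < x then x ^ (H - 1 / 2) else 0

/-- The integral `I_H = ∫_0^∞ (s^{H−1/2} − (s−1)₊^{H−1/2})² ds`. -/
def IH (H : ℝ) : ℝ := ∫ s in Ioi (0 : ℝ), (pplus H s - pplus H (s - 1)) ^ 2

/-- The normalizing constant `K_H = Γ(H+1/2)/√(sin(πH)·Γ(2H+1))` of the fractional
kernel. -/
def KH (H : ℝ) : ℝ :=
  Real.Gamma (H + 1 / 2) / Real.sqrt (Real.sin (Real.pi * H) * Real.Gamma (2 * H + 1))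

lemma aux_neg {α : Type*} [MeasurableSpace α] {μ : Measure α} {f : α → ℝ} {s : Set α}
    (hs : MeasurableSet s) (hf : IntegrableOn f s μ) (hn : ∀ x ∈ s, f x < 0) (h0 : 0 < μ s) :
    ∫ x in s, f x ∂μ < 0 := by
  have h1 : 0 < ∫ x in s, -f x ∂μ := by
    rw [setIntegral_pos_iff_support_of_nonneg_ae]
    · refine lt_of_lt_of_le h0 (measure_mono fun x hx => ⟨?_, hx⟩)
      have := hn x hx
      simp only [Function.mem_support]
      linarith
    · filter_upwards [ae_restrict_mem hs] with x hx
      have := hn x hx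
      simp only [Pi.zero_apply]
      linarith
    · exact hf.neg
  rw [integral_neg] at h1
  linarith

lemma pplus_pos (H : ℝ) {x : ℝ} (h : 0 < x) : pplus H x = x ^ (H - 1 / 2) := by
  simp [pplus, h]

lemma pplus_nonpos (H : ℝ) {x : ℝ} (h : x ≤ 0) : pplus H x = 0 := by
  simp [pplus, not_lt.mpr h]

lemma pplus_meas (H : ℝ) : Measurable (pplus H) := by
  unfold pplus
  exact Measurable.ite measurableSet_Ioi (by fun_prop) measurable_const

lemma tail_G (H : ℝ) (hH0 : 0 < H) (hH : H < 1 / 2) :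
    IntegrableOn (fun r => pplus H r - pplus H (r - 1)) (Ioi 1) ∧
    ∫ r in Ioi 1, (pplus H r - pplus H (r - 1)) = - (1 / (H + 1 / 2)) := by
  have hb : 0 < H + 1 / 2 := by linarith
  set Φ : ℝ → ℝ := fun r => (r ^ (H + 1 / 2) - (r - 1) ^ (H + 1 / 2)) / (H + 1 / 2) with hΦ
  have hcont : ContinuousWithinAt Φ (Ici 1) 1 := by
    apply ContinuousAt.continuousWithinAt
    have h1 : ContinuousAt (fun r : ℝ => r ^ (H + 1 / 2)) 1 :=
      continuousAt_id.rpow_const (Or.inr hb.le)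
    have h2 : ContinuousAt (fun r : ℝ => (r - 1) ^ (H + 1 / 2)) 1 :=
      (continuousAt_id.sub continuousAt_const).rpow_const (Or.inr hb.le)
    exact (h1.sub h2).div_const _
  have hder : ∀ x ∈ Ioi (1 : ℝ), HasDerivAt Φ (pplus H x - pplus H (x - 1)) x := by
    intro x hx
    have hx : 1 < x := hx
    have h1 := (hasDerivAt_id x).rpow_const (p := H + 1 / 2) (Or.inl (by simp; linarith))
    have h2 := ((hasDerivAt_id x).sub_const 1).rpow_const (p := H + 1 / 2)
      (Or.inl (by simp; linarith))
    have h3 := (h1.sub h2).div_const (H + 1 / 2)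
    rw [pplus_pos H (by linarith), pplus_pos H (by linarith)]
    refine HasDerivAt.congr_deriv (f := Φ) h3 ?_
    have : H + 1 / 2 - 1 = H - 1 / 2 := by ring
    rw [this]
    simp only [id]
    field_simp
  have hneg : ∀ x ∈ Ioi (1 : ℝ), pplus H x - pplus H (x - 1) ≤ 0 := by
    intro x hx
    have hx : 1 < x := hx
    rw [pplus_pos H (by linarith), pplus_pos H (by linarith)]
    have := Real.rpow_le_rpow_of_nonpos (x := x - 1) (y := x) (z := H - 1 / 2) (by linarith)
      (by linarith) (by linarith)
    linarith
  have hlim : Filter.Tendsto Φ Filter.atTop (nhds 0) := by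
    have h1 : Filter.Tendsto (fun r : ℝ => (r - 1) ^ (H - 1 / 2) / (H + 1 / 2))
        Filter.atTop (nhds 0) := by
      have h2 := tendsto_rpow_neg_atTop (y := 1 / 2 - H) (by linarith)
      have h3 : Filter.Tendsto (fun r : ℝ => r - 1) Filter.atTop Filter.atTop :=
        Filter.tendsto_atTop_add_const_right _ _ Filter.tendsto_id
      have h4 := (h2.comp h3).div_const (H + 1 / 2)
      simpa [Function.comp_def] using h4
    refine squeeze_zero' ?_ ?_ h1
    · filter_upwards [Filter.eventually_gt_atTop 1] with r hr
      apply div_nonneg _ hb.le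
      have := Real.rpow_le_rpow (x := r - 1) (y := r) (z := H + 1 / 2) (by linarith)
        (by linarith) hb.le
      linarith
    · filter_upwards [Filter.eventually_gt_atTop 1] with r hr
      simp only [hΦ]
      apply div_le_div_of_nonneg_right _ hb.le
      have e1 : r ^ (H + 1 / 2) = r ^ (H - 1 / 2) * r := by
        rw [← Real.rpow_add_one (by linarith)]; congr 1; ring
      have e2 : (r - 1) ^ (H + 1 / 2) = (r - 1) ^ (H - 1 / 2) * (r - 1) := by
        rw [← Real.rpow_add_one (by linarith)]; congr 1; ring
      have := Real.rpow_le_rpow_of_nonpos (x := r - 1) (y := r) (z := H - 1 / 2) (by linarith)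
        (by linarith) (by linarith)
      rw [e1, e2]
      nlinarith
  refine ⟨integrableOn_Ioi_deriv_of_nonpos hcont hder hneg hlim, ?_⟩
  rw [integral_Ioi_of_hasDerivAt_of_nonpos hcont hder hneg hlim]
  simp [hΦ, Real.zero_rpow (show H + 2⁻¹ ≠ 0 by positivity)]

lemma head_G (H : ℝ) (hH0 : 0 < H) :
    IntegrableOn (fun r => pplus H r - pplus H (r - 1)) (Ioc 0 1) ∧
    ∫ r in Ioc 0 1, (pplus H r - pplus H (r - 1)) = 1 / (H + 1 / 2) := by
  have heq : EqOn (fun r : ℝ => r ^ (H - 1 / 2)) (fun r => pplus H r - pplus H (r - 1))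
      (Ioc 0 1) := by
    intro r hr
    simp only
    rw [pplus_pos H hr.1, pplus_nonpos H (by linarith [hr.2]), sub_zero]
  constructor
  · refine IntegrableOn.congr_fun ?_ heq measurableSet_Ioc
    exact (intervalIntegrable_iff_integrableOn_Ioc_of_le zero_le_one).mp
      (intervalIntegral.intervalIntegrable_rpow' (by linarith))
  · rw [← setIntegral_congr_fun measurableSet_Ioc heq,
      ← intervalIntegral.integral_of_le zero_le_one, integral_rpow (Or.inl (by linarith))]
    have : H - 1 / 2 + 1 = H + 1 / 2 := by ring
    rw [this, Real.one_rpow, Real.zero_rpow (by positivity)]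
    simp

lemma full_G (H : ℝ) (hH0 : 0 < H) (hH : H < 1 / 2) :
    IntegrableOn (fun r => pplus H r - pplus H (r - 1)) (Ioi 0) ∧
    ∫ r in Ioi 0, (pplus H r - pplus H (r - 1)) = 0 := by
  have h1 := head_G H hH0
  have h2 := tail_G H hH0 hH
  rw [← Ioc_union_Ioi_eq_Ioi (zero_le_one (α := ℝ))]
  refine ⟨h1.1.union h2.1, ?_⟩
  rw [setIntegral_union (by simp) measurableSet_Ioi h1.1 h2.1, h1.2, h2.2]
  ring

/-- dominating function -/
def dom (H r : ℝ) : ℝ :=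
  (Ioc (0 : ℝ) 1).indicator (fun r => r ^ (2 * H - 1)) r + |pplus H r - pplus H (r - 1)|

lemma dom_int (H : ℝ) (hH0 : 0 < H) (hH : H < 1 / 2) : IntegrableOn (dom H) (Ioi 0) := by
  refine Integrable.add ?_ (full_G H hH0 hH).1.abs
  refine Integrable.integrableOn ?_
  rw [integrable_indicator_iff measurableSet_Ioc]
  exact (intervalIntegrable_iff_integrableOn_Ioc_of_le zero_le_one).mp
      (intervalIntegral.intervalIntegrable_rpow' (by linarith))

lemma dom_bound (H c r : ℝ) (hH : H < 1 / 2) (hc : -1 < c) (hr : 0 < r) :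
    ‖(pplus H (c + r + 2) - pplus H (c + r + 1)) * (pplus H r - pplus H (r - 1))‖ ≤ dom H r := by
  have hp : 0 < c + r + 1 := by linarith
  rw [pplus_pos H hp, pplus_pos H (show 0 < c + r + 2 by linarith)]
  have h1 := Real.rpow_le_rpow_of_nonpos (x := c + r + 1) (y := c + r + 2) (z := H - 1 / 2) hp
        (by linarith) (by linarith)
  have h2 := Real.rpow_le_rpow_of_nonpos (x := r) (y := c + r + 1) (z := H - 1 / 2) hr
        (by linarith) (by linarith)
  have h3 : 0 < (c + r + 2) ^ (H - 1 / 2) := Real.rpow_pos_of_pos (by linarith) _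
  have hF : |(c + r + 2) ^ (H - 1 / 2) - (c + r + 1) ^ (H - 1 / 2)| ≤ r ^ (H - 1 / 2) := by
    rw [abs_le]; constructor <;> linarith
  rw [Real.norm_eq_abs, abs_mul]
  refine (mul_le_mul_of_nonneg_right hF (abs_nonneg _)).trans ?_
  unfold dom
  by_cases h : r ≤ 1
  · rw [indicator_of_mem (show r ∈ Ioc (0 : ℝ) 1 from ⟨hr, h⟩), pplus_pos H hr,
      pplus_nonpos H (show r - 1 ≤ 0 by linarith), sub_zero,
      abs_of_pos (Real.rpow_pos_of_pos hr _), ← Real.rpow_add hr]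
    have : H - 1 / 2 + (H - 1 / 2) = 2 * H - 1 := by ring
    rw [this]
    linarith [Real.rpow_pos_of_pos hr (H - 1 / 2)]
  · rw [indicator_of_notMem (fun h' => h h'.2), zero_add]
    have : r ^ (H - 1 / 2) ≤ 1 :=
      Real.rpow_le_one_of_one_le_of_nonpos (by linarith) (by linarith)
    nlinarith [abs_nonneg (pplus H r - pplus H (r - 1))]

lemma inner_int (H c : ℝ) (hH0 : 0 < H) (hH : H < 1 / 2) (hc : -1 < c) :
    IntegrableOn (fun r => (pplus H (c + r + 2) - pplus H (c + r + 1)) *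
      (pplus H r - pplus H (r - 1))) (Ioi 0) := by
  have hm := pplus_meas H
  refine Integrable.mono' (dom_int H hH0 hH) ?_ ?_
  · exact Measurable.aestronglyMeasurable (by fun_prop)
  · filter_upwards [ae_restrict_mem measurableSet_Ioi] with r hr
    exact dom_bound H c r hH hc hr

lemma F_mono (H c : ℝ) (hH0 : 0 < H) (hH : H < 1 / 2) (hc : -1 < c) :
    StrictMonoOn (fun r => (c + r + 2) ^ (H - 1 / 2) - (c + r + 1) ^ (H - 1 / 2)) (Ici 0) := by
  refine strictMonoOn_of_deriv_pos (convex_Ici 0) ?_ ?_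
  · intro x hx
    have hx : 0 ≤ x := hx
    apply ContinuousAt.continuousWithinAt
    apply ContinuousAt.sub
    · exact ContinuousAt.rpow_const (by fun_prop) (Or.inl (by linarith))
    · exact ContinuousAt.rpow_const (by fun_prop) (Or.inl (by linarith))
  · intro x hx
    rw [interior_Ici] at hx
    have hx : 0 < x := hx
    have d2 : HasDerivAt (fun r : ℝ => c + r + 2) 1 x :=
      ((hasDerivAt_id x).const_add c).add_const 2
    have d1 : HasDerivAt (fun r : ℝ => c + r + 1) 1 x :=
      ((hasDerivAt_id x).const_add c).add_const 1
    have h := (d2.rpow_const (p := H - 1 / 2) (Or.inl (by linarith))).sub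
      (d1.rpow_const (p := H - 1 / 2) (Or.inl (by linarith)))
    have h' := h.deriv
    have := Real.rpow_lt_rpow_of_neg (x := c + x + 1) (y := c + x + 2) (z := H - 1 / 2 - 1)
      (by linarith) (by linarith) (by linarith)
    have e : deriv (fun r => (c + r + 2) ^ (H - 1 / 2) - (c + r + 1) ^ (H - 1 / 2)) x = _ := h'
    rw [e]
    nlinarith

lemma inner_neg (H c : ℝ) (hH0 : 0 < H) (hH : H < 1 / 2) (hc : -1 < c) :
    ∫ r in Ioi 0, (pplus H (c + r + 2) - pplus H (c + r + 1)) *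
      (pplus H r - pplus H (r - 1)) < 0 := by
  have hi := inner_int H c hH0 hH hc
  obtain ⟨gi, g0⟩ := full_G H hH0 hH
  set A := pplus H (c + 1 + 2) - pplus H (c + 1 + 1) with hA
  have e : ∫ r in Ioi 0, (pplus H (c + r + 2) - pplus H (c + r + 1)) *
      (pplus H r - pplus H (r - 1)) = ∫ r in Ioi 0, ((pplus H (c + r + 2) - pplus H (c + r + 1)) *
      (pplus H r - pplus H (r - 1)) - A * (pplus H r - pplus H (r - 1))) := by
    rw [integral_sub hi (gi.const_mul A), integral_const_mul, g0]
    simp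
  have hint := hi.sub (gi.const_mul A)
  have hfm := F_mono H c hH0 hH hc
  have hA' : A = (c + 1 + 2) ^ (H - 1 / 2) - (c + 1 + 1) ^ (H - 1 / 2) := by
    rw [hA, pplus_pos H (by linarith), pplus_pos H (by linarith)]
  rw [e, integral_congr_ae (g := fun r => if r = 1 then -1 else
      ((pplus H (c + r + 2) - pplus H (c + r + 1)) *
      (pplus H r - pplus H (r - 1)) - A * (pplus H r - pplus H (r - 1))))]
  · refine aux_neg measurableSet_Ioi (hint.congr ?_) ?_ (by simp)
    · refine ae_restrict_of_ae ?_
      filter_upwards [Measure.ae_ne volume (1 : ℝ)] with r hr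
      simp [hr]
    · intro r hr
      have hr : 0 < r := hr
      by_cases h1 : r = 1
      · simp [h1]
      simp only [h1, if_false]
      rw [← sub_mul, pplus_pos H (show 0 < c + r + 2 by linarith),
        pplus_pos H (show 0 < c + r + 1 by linarith), pplus_pos H hr, hA']
      rcases lt_or_gt_of_ne h1 with h | h
      · rw [pplus_nonpos H (by linarith), sub_zero]
        have := hfm (mem_Ici.mpr hr.le) (mem_Ici.mpr zero_le_one) h
        simp only at this
        exact mul_neg_of_neg_of_pos (by linarith) (Real.rpow_pos_of_pos hr _)
      · rw [pplus_pos H (by linarith)]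
        have := hfm (mem_Ici.mpr zero_le_one) (mem_Ici.mpr hr.le) h
        simp only at this
        have h3 := Real.rpow_lt_rpow_of_neg (x := r - 1) (y := r) (z := H - 1 / 2)
          (by linarith) (by linarith) (by linarith)
        exact mul_neg_of_pos_of_neg (by linarith) (by linarith)
  · refine ae_restrict_of_ae ?_
    filter_upwards [Measure.ae_ne volume (1 : ℝ)] with r hr
    simp [hr]

lemma c_bound (κ v w : ℝ) (hκ : 1 ≤ κ) (hv : v ∈ Ioc (0 : ℝ) 1) (hw : w ∈ Ioc (0 : ℝ) 1) :
    -1 < (v - w) / κ := by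
  rw [lt_div_iff₀ (by linarith)]
  linarith [hv.1, hw.2]

/-- negativity of the limiting constant, last claim of Lemma 4: for every
`κ ∈ [1, ∞)` and `H ∈ (0, 1/2)`, the constant
`C_{κ,H} = K_H^{−2}·∫_0^1∫_0^1∫_0^∞ [((v−w)/κ + r + 2)₊^{H−1/2} − ((v−w)/κ + r + 1)₊^{H−1/2}]
·[r^{H−1/2} − (r−1)₊^{H−1/2}] dr dw dv`
is finite (the inner integrand is integrable on `(0, ∞)` for each `v, w`) and strictly
negative; equivalently (since `K_H^{−2} > 0`) the triple Lebesgue integral is strictly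
negative. -/
theorem stmt11 (κ H : ℝ) (hκ : 1 ≤ κ) (hH0 : 0 < H) (hH : H < 1 / 2) :
    (∀ v ∈ Ioc (0 : ℝ) 1, ∀ w ∈ Ioc (0 : ℝ) 1,
      IntegrableOn
        (fun r => (pplus H ((v - w) / κ + r + 2) - pplus H ((v - w) / κ + r + 1)) *
          (pplus H r - pplus H (r - 1))) (Ioi (0 : ℝ))) ∧
    (∫ v in Ioc (0 : ℝ) 1, ∫ w in Ioc (0 : ℝ) 1, ∫ r in Ioi (0 : ℝ),
      (pplus H ((v - w) / κ + r + 2) - pplus H ((v - w) / κ + r + 1)) *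
        (pplus H r - pplus H (r - 1))) < 0 := by
  refine ⟨fun v hv w hw => inner_int H _ hH0 hH (c_bound κ v w hκ hv hw), ?_⟩
  have hm := pplus_meas H
  set J : ℝ → ℝ → ℝ := fun v w => ∫ r in Ioi (0 : ℝ),
      (pplus H ((v - w) / κ + r + 2) - pplus H ((v - w) / κ + r + 1)) *
        (pplus H r - pplus H (r - 1)) with hJ
  set C := ∫ r in Ioi (0 : ℝ), dom H r with hC
  have hJm : StronglyMeasurable (fun p : ℝ × ℝ => J p.1 p.2) := by
    have : StronglyMeasurable (fun q : (ℝ × ℝ) × ℝ =>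
      (pplus H ((q.1.1 - q.1.2) / κ + q.2 + 2) - pplus H ((q.1.1 - q.1.2) / κ + q.2 + 1)) *
        (pplus H q.2 - pplus H (q.2 - 1))) := Measurable.stronglyMeasurable (by fun_prop)
    exact this.integral_prod_right
  have hJn : ∀ v ∈ Ioc (0 : ℝ) 1, ∀ w ∈ Ioc (0 : ℝ) 1, J v w < 0 := fun v hv w hw =>
    inner_neg H _ hH0 hH (c_bound κ v w hκ hv hw)
  have hJb : ∀ v ∈ Ioc (0 : ℝ) 1, ∀ w ∈ Ioc (0 : ℝ) 1, ‖J v w‖ ≤ C := by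
    intro v hv w hw
    refine norm_integral_le_of_norm_le (dom_int H hH0 hH) ?_
    filter_upwards [ae_restrict_mem measurableSet_Ioi] with r hr
    exact dom_bound H _ r hH (c_bound κ v w hκ hv hw) hr
  have hJi : ∀ v ∈ Ioc (0 : ℝ) 1, IntegrableOn (J v) (Ioc 0 1) := by
    intro v hv
    refine Integrable.mono' (g := fun _ => C) (integrable_const _) ?_ ?_
    · exact (hJm.comp_measurable (measurable_prodMk_left (x := v))).aestronglyMeasurable
    · filter_upwards [ae_restrict_mem measurableSet_Ioc] with w hw
      exact hJb v hv w hw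
  have hMn : ∀ v ∈ Ioc (0 : ℝ) 1, ∫ w in Ioc (0 : ℝ) 1, J v w < 0 := fun v hv =>
    aux_neg measurableSet_Ioc (hJi v hv) (hJn v hv) (by simp)
  refine aux_neg measurableSet_Ioc ?_ hMn (by simp)
  refine Integrable.mono' (g := fun _ => C) (integrable_const _) ?_ ?_
  · exact hJm.integral_prod_right.aestronglyMeasurable
  · filter_upwards [ae_restrict_mem measurableSet_Ioc] with v hv
    have := norm_setIntegral_le_of_norm_le_const (μ := volume) (s := Ioc (0 : ℝ) 1) (f := J v)
      (C := C) (by simp) (hJb v hv)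
    simpa using this

end
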